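/- arXiv:2103.10235 — 2 statements merged into one kernel-verified Lean document; each statement's English description precedes it below -/
import Mathlib

section
/- With the setup above, for every λ > 0 the cardinalities satisfy the renewal identity |A_λ| = Σ_{i∈I} |A_{λ/α_i}| + [λ ≤ 1], where [λ ≤ 1] is 1 if λ ≤ 1 and 0 otherwise. (Note the sum has only finitely many nonzero terms since A_{λ/α_i} = ∅ when α_i < λ.) -/
/-- The weight of a finite word: the product of the weights of its letters. -/
noncomputable def wordWeight {I : Type*} (α : I → ℝ) (v : List I) : ℝ :=
  (v.map α).prod

theorem ww_nil {I : Type*} (α : I → ℝ) : wordWeight α [] = 1 := by simp [wordWeight]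

theorem ww_cons {I : Type*} (α : I → ℝ) (i : I) (v : List I) :
    wordWeight α (i :: v) = α i * wordWeight α v := by simp [wordWeight]

theorem ww_bounds {I : Type*} (α : I → ℝ) (hpos : ∀ i, 0 < α i) (hlt : ∀ i, α i < 1)
    (v : List I) : 0 < wordWeight α v ∧ wordWeight α v ≤ 1 := by
  induction v with
  | nil => simp [ww_nil]
  | cons i v ih =>
    rw [ww_cons]
    exact ⟨mul_pos (hpos i) ih.1, mul_le_one₀ (hlt i).le ih.1.le ih.2⟩

theorem letters_finite {I : Type*} (α : I → ℝ) (hpos : ∀ i, 0 < α i) (hsum : HasSum α 1)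
    (lam : ℝ) (hlam : 0 < lam) : {i | lam ≤ α i}.Finite := by
  have h := hsum.summable.tendsto_cofinite_zero.eventually (gt_mem_nhds hlam)
  rw [Filter.eventually_cofinite] at h
  simpa using h

theorem letters_bound {I : Type*} (α : I → ℝ) (hpos : ∀ i, 0 < α i) (hlt : ∀ i, α i < 1)
    (hsum : HasSum α 1) : ∃ c : ℝ, 0 < c ∧ c < 1 ∧ ∀ i, α i ≤ c := by
  by_cases h : ∃ i, 1 / 2 ≤ α i
  · obtain ⟨j, hj, hm⟩ := Set.exists_max_image _ α
      (letters_finite α hpos hsum (1 / 2) (by norm_num)) h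
    refine ⟨α j, hpos j, hlt j, fun i => ?_⟩
    by_cases hi : 1 / 2 ≤ α i
    · exact hm i hi
    · exact (not_le.1 hi).le.trans hj
  · push Not at h
    exact ⟨1 / 2, by norm_num, by norm_num, fun i => (h i).le⟩

theorem mem_cons_iff {I : Type*} (α : I → ℝ) (hpos : ∀ i, 0 < α i) (lam : ℝ) (i : I)
    (v : List I) : lam ≤ wordWeight α (i :: v) ↔ lam / α i ≤ wordWeight α v := by
  rw [ww_cons, div_le_iff₀' (hpos i)]

theorem letter_of_mem {I : Type*} (α : I → ℝ) (hpos : ∀ i, 0 < α i) (hlt : ∀ i, α i < 1)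
    (lam : ℝ) (i : I) (v : List I) (h : lam ≤ wordWeight α (i :: v)) : lam ≤ α i := by
  rw [ww_cons] at h
  exact h.trans (mul_le_of_le_one_right (hpos i).le (ww_bounds α hpos hlt v).2)

theorem words_finite {I : Type*} (α : I → ℝ) (hpos : ∀ i, 0 < α i) (hlt : ∀ i, α i < 1)
    (hsum : HasSum α 1) (lam : ℝ) (hlam : 0 < lam) :
    {v : List I | lam ≤ wordWeight α v}.Finite := by
  obtain ⟨c, hc0, hc1, hc⟩ := letters_bound α hpos hlt hsum
  obtain ⟨n, hn⟩ := exists_pow_lt_of_lt_one hlam hc1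
  clear hlam
  induction n generalizing lam with
  | zero =>
    convert Set.finite_empty
    ext v
    have := (ww_bounds α hpos hlt v).2
    simp at hn ⊢
    linarith
  | succ n ih =>
    have hlam : 0 < lam := (pow_pos hc0 _).trans hn
    refine ((Set.finite_singleton []).union ((letters_finite α hpos hsum lam hlam).biUnion
      (t := fun i => (List.cons i) '' {v | lam / α i ≤ wordWeight α v})
      (fun i _ => (ih (lam / α i) ?_).image _))).subset ?_
    · rw [lt_div_iff₀ (hpos i)]
      refine lt_of_le_of_lt ?_ hn
      rw [pow_succ]
      exact mul_le_mul_of_nonneg_left (hc i) (pow_pos hc0 _).le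
    · rintro (_ | ⟨i, v⟩) hv
      · simp
      · right
        simp only [Set.mem_iUnion]
        exact ⟨i, letter_of_mem α hpos hlt lam i v hv, v,
          (mem_cons_iff α hpos lam i v).1 hv, rfl⟩

/-- Renewal identity: `|A_λ| = Σ_{i∈I} |A_{λ/α_i}| + [λ ≤ 1]`, where
`A_λ = {v ∈ W(I) : α_v ≥ λ}`. -/
theorem card_words_renewal {I : Type*} [Countable I] (α : I → ℝ)
    (hpos : ∀ i, 0 < α i) (hlt : ∀ i, α i < 1) (hsum : HasSum α 1)
    (lam : ℝ) (hlam : 0 < lam) :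
    (Nat.card {v : List I | lam ≤ wordWeight α v} : ℝ) =
      (∑' i : I, (Nat.card {v : List I | lam / α i ≤ wordWeight α v} : ℝ)) +
        (if lam ≤ 1 then 1 else 0) := by
  classical
  have hF := letters_finite α hpos hsum lam hlam
  have hW := words_finite α hpos hlt hsum lam hlam
  have hWi := fun i => words_finite α hpos hlt hsum (lam / α i) (div_pos hlam (hpos i))
  rw [tsum_eq_sum (s := hF.toFinset)]
  · simp only [Nat.card_coe_set_eq]
    rw [Set.ncard_eq_toFinset_card _ hW]
    have key : hW.toFinset =
        (hF.toFinset.biUnion fun i => (hWi i).toFinset.image (List.cons i)) ∪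
          (if lam ≤ 1 then {[]} else ∅) := by
      ext v
      rcases v with _ | ⟨i, v⟩
      · by_cases h : lam ≤ 1 <;> simp [ww_nil, h]
      · have h1 := mem_cons_iff α hpos lam i v
        have h2 := letter_of_mem α hpos hlt lam i v
        have h3 : (i :: v) ∉ (if lam ≤ 1 then {[]} else ∅ : Finset (List I)) := by
          split_ifs <;> simp
        simp only [Finset.mem_union, h3, or_false, Finset.mem_biUnion, Finset.mem_image,
          Set.Finite.mem_toFinset, Set.mem_ofPred_eq, List.cons.injEq]
        constructor
        · intro h
          exact ⟨i, h2 h, v, h1.1 h, rfl, rfl⟩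
        · rintro ⟨j, _, w, hw, rfl, rfl⟩
          exact h1.2 hw
    rw [key, Finset.card_union_of_disjoint, Finset.card_biUnion]
    · push_cast
      congr 1
      · refine Finset.sum_congr rfl fun i _ => ?_
        rw [Finset.card_image_of_injective _ List.cons_injective,
          Set.ncard_eq_toFinset_card _ (hWi i)]
      · split_ifs <;> simp
    · intro i _ j _ hij
      refine Finset.disjoint_left.2 ?_
      intro v hv hv'
      simp only [Finset.mem_image] at hv hv'
      obtain ⟨a, _, rfl⟩ := hv
      obtain ⟨b, _, hb⟩ := hv'
      simp only [List.cons.injEq] at hb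
      exact hij hb.1.symm
    · split_ifs <;> simp
  · intro i hi
    have : {v : List I | lam / α i ≤ wordWeight α v} = ∅ := by
      ext v
      simp only [Set.mem_ofPred_eq, Set.mem_empty_iff_false, iff_false]
      intro h
      have h2 := letter_of_mem α hpos hlt lam i v ((mem_cons_iff α hpos lam i v).2 h)
      exact hi (hF.mem_toFinset.2 h2)
    rw [this]
    simp
end

section
/- Suppose (α_i)_{i∈I} are positive, sum to 1, the group generated by {−log α_i} is not cyclic (higher rank), and H = −Σ α_i log α_i < ∞. Then λ|A_λ| → 1/H as λ → 0+, i.e. |A_λ| ~ 1/(Hλ). -/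
open Filter Topology

theorem semi_dense {I : Type*} (x : I → ℝ) (i0 : I) (hx : ∀ i, 0 < x i)
    (hrank : ¬ ∃ c : ℝ, ∀ i : I, ∃ k : ℤ, x i = k * c) (ε : ℝ) (hε : 0 < ε) :
    ∃ L : ℝ, ∀ y ≥ L, ∃ s ∈ AddSubmonoid.closure (Set.range x), y ≤ s ∧ s ≤ y + ε := by
  set P := AddSubmonoid.closure (Set.range x) with hP
  have hmem : ∀ i, x i ∈ P := fun i => AddSubmonoid.subset_closure ⟨i, rfl⟩
  have hnn : ∀ s ∈ P, 0 ≤ s := by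
    intro s hs
    induction hs using AddSubmonoid.closure_induction with
    | mem s hs => obtain ⟨i, rfl⟩ := hs; exact (hx i).le
    | zero => exact le_rfl
    | add a b _ _ ha hb => exact add_nonneg ha hb
  have hd : ∀ g ∈ AddSubgroup.closure (Set.range x), ∃ a ∈ P, ∃ b ∈ P, g = a - b := by
    intro g hg
    induction hg using AddSubgroup.closure_induction with
    | mem s hs => exact ⟨s, AddSubmonoid.subset_closure hs, 0, P.zero_mem, by simp⟩
    | zero => exact ⟨0, P.zero_mem, 0, P.zero_mem, by simp⟩
    | add a b _ _ ha hb =>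
      obtain ⟨a1, h1, a2, h2, rfl⟩ := ha
      obtain ⟨b1, h3, b2, h4, rfl⟩ := hb
      exact ⟨a1 + b1, P.add_mem h1 h3, a2 + b2, P.add_mem h2 h4, by ring⟩
    | neg a _ ha =>
      obtain ⟨a1, h1, a2, h2, rfl⟩ := ha
      exact ⟨a2, h2, a1, h1, by ring⟩
  have hdense : Dense (AddSubgroup.closure (Set.range x) : Set ℝ) := by
    rcases AddSubgroup.dense_or_cyclic (AddSubgroup.closure (Set.range x)) with h | ⟨a, ha⟩
    · exact h
    · exfalso
      apply hrank
      refine ⟨a, fun i => ?_⟩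
      have : x i ∈ AddSubgroup.closure (Set.range x) := AddSubgroup.subset_closure ⟨i, rfl⟩
      rw [ha, AddSubgroup.mem_closure_singleton] at this
      obtain ⟨n, hn⟩ := this
      exact ⟨n, by rw [← hn]; simp⟩
  obtain ⟨g, hg, hg0, hgε⟩ := hdense.exists_between hε
  obtain ⟨a', ha', b', hb', hgab⟩ := hd g hg
  set a := a' + x i0 with ha_def
  set b := b' + x i0 with hb_def
  have ha : a ∈ P := P.add_mem ha' (hmem i0)
  have hb : b ∈ P := P.add_mem hb' (hmem i0)
  have hb0 : 0 < b := by have := hnn b' hb'; have := hx i0; linarith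
  have hg2 : g = a - b := by rw [hgab]; ring
  obtain ⟨k0, hk0⟩ := exists_nat_ge (b / g)
  rw [div_le_iff₀ hg0] at hk0
  refine ⟨k0 * b, fun y hy => ?_⟩
  have hy0 : 0 ≤ y := le_trans (by positivity) hy
  set k := ⌊y / b⌋₊ with hk
  have h1 : (k : ℝ) * b ≤ y := by
    rw [← le_div_iff₀ hb0]; exact Nat.floor_le (by positivity)
  have h2 : y < (k + 1) * b := by
    rw [← div_lt_iff₀ hb0]; exact Nat.lt_floor_add_one _
  have h3 : k0 ≤ k := Nat.le_floor (by rw [le_div_iff₀ hb0]; exact hy)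
  set r := y - k * b with hr
  have hr0 : 0 ≤ r := by linarith
  set j := ⌈r / g⌉₊ with hj
  have h4 : r ≤ j * g := by
    rw [← div_le_iff₀ hg0]; exact Nat.le_ceil _
  have h5 : (j : ℝ) * g < r + g := by
    have := Nat.ceil_lt_add_one (a := r / g) (by positivity)
    have h := mul_lt_mul_of_pos_right this hg0
    rwa [add_mul, one_mul, div_mul_cancel₀ _ hg0.ne'] at h
  have h6 : j ≤ k := by
    apply le_trans _ h3
    apply Nat.ceil_le.2
    rw [div_le_iff₀ hg0]; linarith
  refine ⟨(k - j) • b + j • a, P.add_mem (P.nsmul_mem hb _) (P.nsmul_mem ha _), ?_⟩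
  have : ((k - j) • b + j • a : ℝ) = k * b + j * g := by
    simp only [nsmul_eq_mul]
    rw [Nat.cast_sub h6, hg2]; ring
  rw [this]
  constructor <;> linarith

/-- propagation -/
theorem propagate {I : Type*} (α x : I → ℝ) (hα : ∀ i, 0 < α i) (hsum : HasSum α 1)
    (Z : ℝ → ℝ) (C : ℝ) (hC : ∀ t, |Z t| ≤ C)
    (hZ : Tendsto (fun t => Z t - ∑' i, α i * Z (t - x i)) atTop (𝓝 0))
    (M : ℝ) (hM : ∀ ε > 0, ∀ᶠ t in atTop, Z t < M + ε)
    (s : ℝ) (hs : s ∈ AddSubmonoid.closure (Set.range x)) :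
    ∀ l : Filter ℝ, l ≤ atTop → Tendsto Z l (𝓝 M) → Tendsto (fun t => Z (t - s)) l (𝓝 M) := by
  induction hs using AddSubmonoid.closure_induction with
  | mem s hs =>
    obtain ⟨i, rfl⟩ := hs
    intro l hl hZM
    have hshift : ∀ c : ℝ, Tendsto (fun t : ℝ => t - c) l atTop := fun c =>
      (tendsto_atTop_add_const_right atTop (-c) tendsto_id).mono_left hl
    have hmaxlim : ∀ j, Tendsto (fun t => max (Z (t - x j)) M) l (𝓝 M) := by
      intro j
      rw [Metric.tendsto_nhds]
      intro ε hε
      filter_upwards [(hshift (x j)).eventually (hM ε hε)] with t ht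
      rw [Real.dist_eq, abs_lt]
      constructor
      · linarith [le_max_right (Z (t - x j)) M]
      · have := max_lt ht (by linarith : M < M + ε)
        linarith
    have hb1 : ∀ t, |max (Z t) M| ≤ C + |M| := fun t => by
      rcases max_choice (Z t) M with h | h <;> rw [h]
      · linarith [hC t, abs_nonneg M]
      · linarith [(abs_nonneg _).trans (hC t)]
    have hs1 : Tendsto (fun t => ∑' j, α j * max (Z (t - x j)) M) l (𝓝 (∑' j, α j * M)) := by
      apply tendsto_tsum_of_dominated_convergence (bound := fun j => α j * (C + |M|))
      · exact hsum.summable.mul_right _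
      · exact fun j => (hmaxlim j).const_mul _
      · filter_upwards with t j
        rw [norm_mul, Real.norm_eq_abs, abs_of_pos (hα j), Real.norm_eq_abs]
        exact mul_le_mul_of_nonneg_left (hb1 _) (hα j).le
    rw [tsum_mul_right, hsum.tsum_eq, one_mul] at hs1
    have hs2 : Tendsto (fun t => ∑' j, α j * Z (t - x j)) l (𝓝 M) := by
      have := hZM.sub (hZ.mono_left hl)
      simpa using this
    have hsm1 : ∀ t, Summable fun j => α j * max (Z (t - x j)) M := fun t =>
      Summable.of_norm_bounded (hsum.summable.mul_right (C + |M|)) fun j => by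
        rw [norm_mul, Real.norm_eq_abs, abs_of_pos (hα j), Real.norm_eq_abs]
        exact mul_le_mul_of_nonneg_left (hb1 _) (hα j).le
    have hsm2 : ∀ t, Summable fun j => α j * Z (t - x j) := fun t =>
      Summable.of_norm_bounded (hsum.summable.mul_right C) fun j => by
        rw [norm_mul, Real.norm_eq_abs, abs_of_pos (hα j), Real.norm_eq_abs]
        exact mul_le_mul_of_nonneg_left (hC _) (hα j).le
    have hs3 := hs1.sub hs2
    rw [sub_self] at hs3
    have hs4 : Tendsto (fun t => α i * max (Z (t - x i)) M - α i * Z (t - x i)) l (𝓝 0) := by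
      apply squeeze_zero _ _ hs3
      · intro t
        rw [← mul_sub]
        exact mul_nonneg (hα i).le (by linarith [le_max_left (Z (t - x i)) M])
      · intro t
        rw [← (hsm1 t).tsum_sub (hsm2 t)]
        apply ((hsm1 t).sub (hsm2 t)).le_tsum i
        intro j _
        rw [← mul_sub]
        exact mul_nonneg (hα j).le (by linarith [le_max_left (Z (t - x j)) M])
    have hs5 := (hs4.const_mul (α i)⁻¹)
    have hs6 := (hmaxlim i).sub hs5
    rw [mul_zero, sub_zero] at hs6
    refine hs6.congr fun t => ?_
    have := (hα i).ne'
    field_simp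
    ring
  | zero => intro l _ h; simpa using h
  | add a b _ _ ha hb =>
    intro l hl h
    have hshift : Tendsto (fun t : ℝ => t - a) l atTop :=
      (tendsto_atTop_add_const_right atTop (-a) tendsto_id).mono_left hl
    have h1 := hb (map (fun t => t - a) l) hshift (by simpa [tendsto_map'_iff, Function.comp_def] using ha l hl h)
    rw [tendsto_map'_iff] at h1
    refine h1.congr fun t => ?_
    simp only [Function.comp]
    congr 1; ring

theorem avg_lim {I : Type*} (α x : I → ℝ) (hα : ∀ i, 0 < α i) (hx : ∀ i, 0 < x i)
    (hH : Summable fun i => α i * x i) (g : ℝ → ℝ) (hg : Measurable g) (C : ℝ) (hC : ∀ t, |g t| ≤ C)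
    (l : Filter ℝ) [l.IsCountablyGenerated] (c : ℝ)
    (hlim : ∀ y ≥ 0, Tendsto (fun t => g (t - y)) l (𝓝 c)) :
    Tendsto (fun t => ∑' i, α i * ∫ y in (0:ℝ)..x i, g (t - y)) l (𝓝 (c * ∑' i, α i * x i)) := by
  have : c * ∑' i, α i * x i = ∑' i, α i * (c * x i) := by
    rw [← tsum_mul_left]; congr 1; ext i; ring
  rw [this]
  apply tendsto_tsum_of_dominated_convergence (bound := fun i => (α i * x i) * C)
  · exact hH.mul_right _
  · intro i
    apply Tendsto.const_mul
    have h0 : c * x i = ∫ y in (0:ℝ)..x i, c := by simp [mul_comm]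
    rw [h0]
    apply intervalIntegral.tendsto_integral_filter_of_dominated_convergence (fun _ => C)
    · filter_upwards with t
      exact (hg.comp (measurable_const.sub measurable_id)).aestronglyMeasurable
    · filter_upwards with t
      filter_upwards with y hy
      exact hC _
    · simp
    · filter_upwards with y hy
      rw [Set.uIoc_of_le (hx i).le] at hy
      exact hlim y hy.1.le
  · filter_upwards with t i
    rw [norm_mul, Real.norm_eq_abs, abs_of_pos (hα i), mul_assoc]
    apply mul_le_mul_of_nonneg_left _ (hα i).le
    have := intervalIntegral.norm_integral_le_of_norm_le_const (a := 0) (b := x i) (C := C)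
      (f := fun y => g (t - y)) (fun y _ => hC _)
    rw [sub_zero, abs_of_pos (hx i)] at this
    linarith

/-- filter along which the limsup is attained -/
theorem exists_filter_limsup (Z : ℝ → ℝ) (C : ℝ) (hC : ∀ t, |Z t| ≤ C) :
    ∃ M : ℝ, (∀ ε > 0, ∀ᶠ t in atTop, Z t < M + ε) ∧
      ∃ l : Filter ℝ, l.NeBot ∧ l.IsCountablyGenerated ∧ l ≤ atTop ∧ Tendsto Z l (𝓝 M) := by
  have hb : IsBoundedUnder (· ≤ ·) atTop Z :=
    isBoundedUnder_of ⟨C, fun t => (abs_le.1 (hC t)).2⟩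
  have hb' : IsBoundedUnder (· ≥ ·) atTop Z :=
    isBoundedUnder_of ⟨-C, fun t => (abs_le.1 (hC t)).1⟩
  have hup : ∀ ε > 0, ∀ᶠ t in atTop, Z t < limsup Z atTop + ε := fun ε hε =>
    eventually_lt_of_limsup_lt (by linarith) hb
  refine ⟨limsup Z atTop, hup, atTop ⊓ comap Z (𝓝 (limsup Z atTop)), ?_, inferInstance,
    inf_le_left, tendsto_comap.mono_left inf_le_right⟩
  have hcl : MapClusterPt (limsup Z atTop) atTop Z := by
    rw [mapClusterPt_iff_frequently]
    intro s hs
    obtain ⟨ε, hε, hsub⟩ := Metric.mem_nhds_iff.1 hs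
    have h1 : ∃ᶠ t in atTop, limsup Z atTop - ε < Z t :=
      frequently_lt_of_lt_limsup hb'.isCoboundedUnder_le (by linarith)
    refine (h1.and_eventually (hup ε hε)).mono fun t ht => hsub ?_
    rw [Metric.mem_ball, Real.dist_eq, abs_lt]
    constructor <;> linarith [ht.1, ht.2]
  rw [inf_comm]
  exact Filter.NeBot.of_map (m := Z) (by rw [Filter.push_pull']; exact hcl)

theorem key_limit {I : Type*} (α x : I → ℝ) (i0 : I) (hα : ∀ i, 0 < α i) (hx : ∀ i, 0 < x i)
    (hsum : HasSum α 1) (hH : Summable fun i => α i * x i)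
    (hrank : ¬ ∃ c : ℝ, ∀ i : I, ∃ k : ℤ, x i = k * c)
    (Z : ℝ → ℝ) (hZm : Measurable Z) (C : ℝ) (hC : ∀ t, |Z t| ≤ C) (hZ0 : ∀ t, 0 ≤ Z t)
    (hmono : ∀ s t, s ≤ t → Real.exp (-(t - s)) * Z s ≤ Z t)
    (hZ : Tendsto (fun t => Z t - ∑' i, α i * Z (t - x i)) atTop (𝓝 0))
    (hJ : Tendsto (fun t => ∑' i, α i * ∫ y in (0:ℝ)..x i, Z (t - y)) atTop (𝓝 1)) :
    Tendsto Z atTop (𝓝 (1 / ∑' i, α i * x i)) := by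
  set H := ∑' i, α i * x i with hHdef
  have hHpos : 0 < H := hH.tsum_pos (fun i => (mul_pos (hα i) (hx i)).le) i0 (mul_pos (hα i0) (hx i0))
  have hint : ∀ (g : ℝ → ℝ) (K : ℝ), Measurable g → (∀ t, |g t| ≤ K) → ∀ a b t : ℝ,
      IntervalIntegrable (fun y => g (t - y)) MeasureTheory.volume a b := by
    intro g K hg hK a b t
    refine (intervalIntegrable_const (c := K)).mono_fun
      (hg.comp (measurable_const.sub measurable_id)).aestronglyMeasurable ?_
    filter_upwards with y
    exact (hK _).trans (le_abs_self _)
  have hcomp : ∀ (g g' : ℝ → ℝ) (K : ℝ), Measurable g → Measurable g' → (∀ t, |g t| ≤ K) →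
      (∀ t, |g' t| ≤ K) → (∀ t, g t ≤ g' t) → ∀ t,
      ∑' i, α i * ∫ y in (0:ℝ)..x i, g (t - y) ≤ ∑' i, α i * ∫ y in (0:ℝ)..x i, g' (t - y) := by
    intro g g' K hg hg' hK hK' hle t
    have hs : ∀ (g : ℝ → ℝ), (∀ t, |g t| ≤ K) →
        Summable fun i => α i * ∫ y in (0:ℝ)..x i, g (t - y) := by
      intro g hK
      refine Summable.of_norm_bounded (hH.mul_right K) fun i => ?_
      rw [norm_mul, Real.norm_eq_abs, abs_of_pos (hα i), mul_assoc]
      apply mul_le_mul_of_nonneg_left _ (hα i).le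
      have := intervalIntegral.norm_integral_le_of_norm_le_const (a := 0) (b := x i) (C := K)
        (f := fun y => g (t - y)) (fun y _ => hK _)
      rw [sub_zero, abs_of_pos (hx i)] at this
      linarith
    refine (hs g hK).tsum_le_tsum (fun i => ?_) (hs g' hK')
    apply mul_le_mul_of_nonneg_left _ (hα i).le
    exact intervalIntegral.integral_mono (hx i).le (hint g K hg hK _ _ _) (hint g' K hg' hK' _ _ _)
      fun y => hle _
  have hshift : ∀ (l : Filter ℝ), l ≤ atTop → ∀ c : ℝ, Tendsto (fun t : ℝ => t - c) l atTop :=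
    fun l hl c => (tendsto_atTop_add_const_right atTop (-c) tendsto_id).mono_left hl
  -- upper bound
  obtain ⟨M, hM, l, hne, hcg, hl, hZM⟩ := exists_filter_limsup Z C hC
  have hprop := fun s hs => propagate α x hα hsum Z C hC hZ M hM s hs l hl hZM
  have hup : M ≤ 1 / H := by
    have key : ∀ ε > 0, Real.exp (-ε) * M * H ≤ 1 := by
      intro ε hε
      obtain ⟨L, hL⟩ := semi_dense x i0 hx hrank ε hε
      set c := Real.exp (-ε) * M with hc
      set g : ℝ → ℝ := fun t => min (Z t) c with hg
      have hgm : Measurable g := hZm.min measurable_const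
      have hgb : ∀ t, |g t| ≤ C + |c| := fun t => by
        rcases min_choice (Z t) c with h | h <;> simp only [hg] <;> rw [h]
        · linarith [hC t, abs_nonneg c]
        · linarith [(abs_nonneg _).trans (hC t)]
      have hglim : ∀ y ≥ 0, Tendsto (fun t => g (t - y)) (map (fun t => t - L) l) (𝓝 c) := by
        intro y hy
        rw [tendsto_map'_iff]
        obtain ⟨s, hs, hs1, hs2⟩ := hL (L + y) (by linarith)
        have h1 : Tendsto (fun t => min (Real.exp (-ε) * Z (t - s)) c) l (𝓝 c) := by
          have := ((hprop s hs).const_mul (Real.exp (-ε))).min (tendsto_const_nhds (x := c))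
          rwa [← hc, min_self] at this
        refine tendsto_of_tendsto_of_tendsto_of_le_of_le h1 tendsto_const_nhds ?_ ?_
        · intro t
          apply min_le_min_right
          refine le_trans ?_ (hmono (t - s) (t - L - y) (by linarith))
          apply mul_le_mul_of_nonneg_right _ (hZ0 _)
          apply Real.exp_le_exp.2
          linarith
        · intro t
          exact min_le_right _ _
      have h2 := avg_lim α x hα hx hH g hgm _ hgb _ c hglim
      have h3 : Tendsto (fun t => ∑' i, α i * ∫ y in (0:ℝ)..x i, Z (t - y))
        (map (fun t => t - L) l) (𝓝 1) := hJ.mono_left (hshift l hl L)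
      exact le_of_tendsto_of_tendsto' h2 h3 fun t =>
        hcomp g Z (C + |c|) hgm hZm hgb (fun t => by linarith [hC t, abs_nonneg c])
          (fun t => min_le_left _ _) t
    have : Tendsto (fun ε : ℝ => Real.exp (-ε) * M * H) (𝓝[>] 0) (𝓝 (Real.exp (-0) * M * H)) := by
      apply Tendsto.mono_left _ nhdsWithin_le_nhds
      exact Continuous.tendsto (by fun_prop) 0
    have h := le_of_tendsto this (by filter_upwards [self_mem_nhdsWithin] with ε hε using key ε hε)
    rw [le_div_iff₀ hHpos]
    simpa using h
  -- lower bound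
  obtain ⟨m', hm, l', hne', hcg', hl', hZm'⟩ := exists_filter_limsup (fun t => - Z t) C
    (fun t => by rw [abs_neg]; exact hC t)
  have hprop' : ∀ s ∈ AddSubmonoid.closure (Set.range x),
      Tendsto (fun t => Z (t - s)) l' (𝓝 (-m')) := fun s hs => by
    have := propagate α x hα hsum (fun t => - Z t) C (fun t => by rw [abs_neg]; exact hC t)
      (by
        have := hZ.neg
        rw [neg_zero] at this
        refine this.congr fun t => ?_
        simp only [mul_neg, tsum_neg]
        ring) m' hm s hs l' hl' hZm'
    simpa using this.neg
  set m := -m' with hmdef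
  have hlow : 1 / H ≤ m := by
    have key : ∀ ε > 0, 1 ≤ Real.exp ε * m * H := by
      intro ε hε
      obtain ⟨L, hL⟩ := semi_dense x i0 hx hrank ε hε
      set c := Real.exp ε * m with hc
      set g : ℝ → ℝ := fun t => max (Z t) c with hg
      have hgm : Measurable g := hZm.max measurable_const
      have hgb : ∀ t, |g t| ≤ C + |c| := fun t => by
        rcases max_choice (Z t) c with h | h <;> simp only [hg] <;> rw [h]
        · linarith [hC t, abs_nonneg c]
        · linarith [(abs_nonneg _).trans (hC t)]
      have hglim : ∀ y ≥ 0, Tendsto (fun t => g (t - y)) (map (fun t => t - (L + ε)) l') (𝓝 c) := by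
        intro y hy
        rw [tendsto_map'_iff]
        obtain ⟨s, hs, hs1, hs2⟩ := hL (L + y) (by linarith)
        have h1 : Tendsto (fun t => max (Real.exp ε * Z (t - s)) c) l' (𝓝 c) := by
          have := ((hprop' s hs).const_mul (Real.exp ε)).max (tendsto_const_nhds (x := c))
          rwa [← hc, max_self] at this
        refine tendsto_of_tendsto_of_tendsto_of_le_of_le tendsto_const_nhds h1 ?_ ?_
        · intro t
          exact le_max_right _ _
        · intro t
          apply max_le_max_right
          have h := hmono (t - (L + ε) - y) (t - s) (by linarith)
          have h' : Real.exp (-ε) * Z (t - (L + ε) - y) ≤ Z (t - s) := by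
            refine le_trans ?_ h
            apply mul_le_mul_of_nonneg_right _ (hZ0 _)
            apply Real.exp_le_exp.2
            linarith
          calc Z (t - (L + ε) - y) = Real.exp ε * (Real.exp (-ε) * Z (t - (L + ε) - y)) := by
                rw [← mul_assoc, ← Real.exp_add]; simp
            _ ≤ _ := mul_le_mul_of_nonneg_left h' (Real.exp_pos _).le
      have h2 := avg_lim α x hα hx hH g hgm _ hgb _ c hglim
      have h3 : Tendsto (fun t => ∑' i, α i * ∫ y in (0:ℝ)..x i, Z (t - y))
        (map (fun t => t - (L + ε)) l') (𝓝 1) := hJ.mono_left (hshift l' hl' (L + ε))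
      exact le_of_tendsto_of_tendsto' h3 h2 fun t =>
        hcomp Z g (C + |c|) hZm hgm (fun t => by linarith [hC t, abs_nonneg c]) hgb
          (fun t => le_max_left _ _) t
    have : Tendsto (fun ε : ℝ => Real.exp ε * m * H) (𝓝[>] 0) (𝓝 (Real.exp 0 * m * H)) := by
      apply Tendsto.mono_left _ nhdsWithin_le_nhds
      exact Continuous.tendsto (by fun_prop) 0
    have h := ge_of_tendsto this (by filter_upwards [self_mem_nhdsWithin] with ε hε using key ε hε)
    rw [div_le_iff₀ hHpos]
    simpa using h
  rw [Metric.tendsto_nhds]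
  intro ε hε
  filter_upwards [hM ε hε, hm ε hε] with t h1 h2
  rw [Real.dist_eq, abs_lt]
  constructor <;> linarith

def lowSet {I : Type*} (x : I → ℝ) (t : ℝ) : Set (List I) := {v | (v.map x).sum ≤ t}

theorem lowSet_neg {I : Type*} (x : I → ℝ) (hx : ∀ i, 0 < x i) (t : ℝ) (ht : t < 0) :
    lowSet x t = ∅ := by
  ext v
  simp only [lowSet, Set.mem_setOf_eq, Set.mem_empty_iff_false, iff_false, not_le]
  refine lt_of_lt_of_le ht (List.sum_nonneg ?_)
  intro a ha
  obtain ⟨i, _, rfl⟩ := List.mem_map.1 ha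
  exact (hx i).le

theorem lowSet_eq {I : Type*} (x : I → ℝ) (hx : ∀ i, 0 < x i) (t : ℝ) (ht : 0 ≤ t)
    (F : Finset I) (hF : ∀ i, x i ≤ t → i ∈ F) :
    lowSet x t = insert [] (⋃ i ∈ F, (List.cons i) '' lowSet x (t - x i)) := by
  ext v
  cases v with
  | nil => simp [lowSet, ht]
  | cons i w =>
    have h : (x i + (w.map x).sum ≤ t) ↔ (w.map x).sum ≤ t - x i := by
      constructor <;> intro h <;> linarith
    simp only [lowSet, Set.mem_setOf_eq, List.map_cons, List.sum_cons, Set.mem_insert_iff,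
      reduceCtorEq, false_or, Set.mem_iUnion, Set.mem_image, List.cons.injEq, h]
    constructor
    · intro hw
      refine ⟨i, hF i ?_, w, hw, rfl, rfl⟩
      by_contra hlt
      have : w ∈ lowSet x (t - x i) := hw
      rw [lowSet_neg x hx _ (by linarith)] at this
      exact this
    · rintro ⟨j, _, w', hw, rfl, rfl⟩
      exact hw

theorem lowSet_finite {I : Type*} (x : I → ℝ) (δ : ℝ) (hδ : 0 < δ) (hx : ∀ i, δ ≤ x i)
    (hfin : ∀ t, {i | x i ≤ t}.Finite) (t : ℝ) : (lowSet x t).Finite := by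
  have hx0 : ∀ i, 0 < x i := fun i => hδ.trans_le (hx i)
  have key : ∀ n : ℕ, ∀ t : ℝ, t < n * δ → (lowSet x t).Finite := by
    intro n
    induction n with
    | zero =>
      intro t ht
      rw [lowSet_neg x hx0 t (by simpa using ht)]
      exact Set.finite_empty
    | succ n ih =>
      intro t ht
      rcases lt_or_ge t 0 with h0 | h0
      · rw [lowSet_neg x hx0 t h0]
        exact Set.finite_empty
      · rw [lowSet_eq x hx0 t h0 (hfin t).toFinset (fun i hi => by simpa using hi)]
        apply Set.Finite.insert
        apply Set.Finite.biUnion (Finset.finite_toSet _)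
        intro i _
        apply Set.Finite.image
        apply ih
        push_cast at ht
        linarith [hx i]
  obtain ⟨n, hn⟩ := exists_nat_gt (t / δ)
  exact key n t ((div_lt_iff₀ hδ).1 hn)

theorem lowSet_card {I : Type*} (x : I → ℝ) (hx : ∀ i, 0 < x i)
    (hfin : ∀ t, (lowSet x t).Finite) (t : ℝ) (ht : 0 ≤ t)
    (F : Finset I) (hF : ∀ i, x i ≤ t → i ∈ F) :
    (lowSet x t).ncard = 1 + ∑ i ∈ F, (lowSet x (t - x i)).ncard := by
  classical
  have h : (hfin t).toFinset = insert [] (F.biUnion fun i => (hfin (t - x i)).toFinset.image (List.cons i)) := by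
    apply Finset.coe_injective
    simp only [Set.Finite.coe_toFinset, Finset.coe_insert, Finset.coe_biUnion, Finset.coe_image]
    exact lowSet_eq x hx t ht F hF
  rw [Set.ncard_eq_toFinset_card _ (hfin t), h, Finset.card_insert_of_notMem, Finset.card_biUnion,
    add_comm]
  · congr 1
    apply Finset.sum_congr rfl
    intro i _
    rw [Finset.card_image_of_injective _ (List.cons_injective), Set.ncard_eq_toFinset_card _ (hfin _)]
  · intro i _ j _ hij
    rw [Function.onFun, Finset.disjoint_left]
    intro v hv hv'
    obtain ⟨w, _, rfl⟩ := Finset.mem_image.1 hv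
    obtain ⟨w', _, h⟩ := Finset.mem_image.1 hv'
    exact hij (List.cons.inj h).1.symm
  · simp

theorem renewal {I : Type*} (α x : I → ℝ) (i0 : I) (hα : ∀ i, 0 < α i)
    (hax : ∀ i, α i = Real.exp (-x i)) (δ : ℝ) (hδ : 0 < δ) (hxδ : ∀ i, δ ≤ x i)
    (hsum : HasSum α 1) (hH : Summable fun i => α i * x i)
    (hrank : ¬ ∃ c : ℝ, ∀ i : I, ∃ k : ℤ, x i = k * c) :
    Tendsto (fun t => Real.exp (-t) * ((lowSet x t).ncard : ℝ)) atTop (𝓝 (1 / ∑' i, α i * x i)) := by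
  have hx : ∀ i, 0 < x i := fun i => hδ.trans_le (hxδ i)
  have hfinI : ∀ t, {i | x i ≤ t}.Finite := by
    intro t
    have := hsum.summable.tendsto_cofinite_zero.eventually (gt_mem_nhds (Real.exp_pos (-t)))
    refine Set.Finite.subset (Filter.eventually_cofinite.1 this) ?_
    intro i hi
    simp only [Set.mem_setOf_eq, not_lt] at hi ⊢
    rw [hax i]
    exact Real.exp_le_exp.2 (by linarith)
  have hfin := lowSet_finite x δ hδ hxδ hfinI
  set N : ℝ → ℝ := fun t => ((lowSet x t).ncard : ℝ) with hN
  set Z : ℝ → ℝ := fun t => Real.exp (-t) * N t with hZ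
  have hNmono : Monotone N := by
    intro s t hst
    simp only [hN]
    exact_mod_cast Set.ncard_le_ncard (fun v hv => le_trans hv hst) (hfin t)
  have hN0 : ∀ t, 0 ≤ N t := fun t => Nat.cast_nonneg _
  have hZ0 : ∀ t, 0 ≤ Z t := fun t => mul_nonneg (Real.exp_pos _).le (hN0 t)
  have hZneg : ∀ t < 0, Z t = 0 := fun t ht => by
    simp only [hZ, hN, lowSet_neg x hx t ht]; simp
  have hZm : Measurable Z := (by fun_prop : Measurable fun t : ℝ => Real.exp (-t)).mul hNmono.measurable
  have hZint : ∀ a b, IntervalIntegrable Z MeasureTheory.volume a b := fun a b =>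
    hNmono.intervalIntegrable.continuousOn_mul (by fun_prop)
  have hmono : ∀ s t, s ≤ t → Real.exp (-(t - s)) * Z s ≤ Z t := by
    intro s t hst
    simp only [hZ]
    rw [← mul_assoc, ← Real.exp_add, show -(t - s) + -s = -t by ring]
    exact mul_le_mul_of_nonneg_left (hNmono hst) (Real.exp_pos _).le
  -- finite renewal equation
  have hren : ∀ T : ℝ, ∀ t, 0 ≤ t → t ≤ T →
      Z t = Real.exp (-t) + ∑ i ∈ (hfinI T).toFinset, α i * Z (t - x i) := by
    intro T t ht htT
    have h := lowSet_card x hx hfin t ht (hfinI T).toFinset (fun i hi => by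
      simp only [Set.Finite.mem_toFinset, Set.mem_setOf_eq]; linarith)
    have h' : N t = 1 + ∑ i ∈ (hfinI T).toFinset, N (t - x i) := by
      simp only [hN]; rw [h]; push_cast; rfl
    simp only [hZ]
    rw [h', mul_add, mul_one, Finset.mul_sum]
    congr 1
    apply Finset.sum_congr rfl
    intro i _
    rw [hax i, ← mul_assoc, ← Real.exp_add]
    congr 2; ring
  have htail : ∀ T, ∀ i ∉ (hfinI T).toFinset, T < x i := fun T i hi => by
    simpa using hi
  have hrenS : ∀ t, 0 ≤ t → Z t - ∑' i, α i * Z (t - x i) = Real.exp (-t) := by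
    intro t ht
    rw [tsum_eq_sum (s := (hfinI t).toFinset), hren t t ht le_rfl]
    · ring
    · intro i hi
      rw [hZneg _ (by linarith [htail t i hi]), mul_zero]
  have hexp : Tendsto (fun t : ℝ => Real.exp (-t)) atTop (𝓝 0) :=
    Real.tendsto_exp_neg_atTop_nhds_zero
  have hZ1 : Tendsto (fun t => Z t - ∑' i, α i * Z (t - x i)) atTop (𝓝 0) := by
    refine hexp.congr' ?_
    filter_upwards [eventually_ge_atTop 0] with t ht using (hrenS t ht).symm
  set S : ℝ → ℝ := fun t => ∫ s in (0:ℝ)..t, Z s with hS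
  have hneg0 : ∀ a ≤ 0, ∫ s in a..(0:ℝ), Z s = 0 := by
    intro a ha
    rw [intervalIntegral.integral_of_le ha, MeasureTheory.integral_Ioc_eq_integral_Ioo]
    apply MeasureTheory.setIntegral_eq_zero_of_forall_eq_zero
    intro s hs
    exact hZneg s hs.2
  have hSneg : ∀ t ≤ 0, S t = 0 := by
    intro t ht
    simp only [hS]
    rw [intervalIntegral.integral_symm, hneg0 t ht, neg_zero]
  have hSren : ∀ t, 0 ≤ t → S t = (1 - Real.exp (-t)) + ∑ i ∈ (hfinI t).toFinset, α i * S (t - x i) := by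
    intro t ht
    have h1 : S t = ∫ s in (0:ℝ)..t, (Real.exp (-s) + ∑ i ∈ (hfinI t).toFinset, α i * Z (s - x i)) := by
      apply intervalIntegral.integral_congr
      intro s hs
      rw [Set.uIcc_of_le ht] at hs
      exact hren t s hs.1 hs.2
    have hi : ∀ i, IntervalIntegrable (fun s => α i * Z (s - x i)) MeasureTheory.volume 0 t := by
      intro i
      apply IntervalIntegrable.const_mul
      have := (hZint (0 - x i) (t - x i)).comp_sub_right (x i)
      simpa using this
    rw [h1, intervalIntegral.integral_add, intervalIntegral.integral_finsetSum]
    · congr 1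
      · rw [intervalIntegral.integral_comp_neg (fun s => Real.exp s)]
        simp
      · apply Finset.sum_congr rfl
        intro i _
        rw [intervalIntegral.integral_const_mul, intervalIntegral.integral_comp_sub_right,
          ← intervalIntegral.integral_add_adjacent_intervals (hZint _ 0) (hZint 0 _),
          hneg0 _ (by linarith [hx i]), zero_add]
    · exact fun i _ => hi i
    · exact Continuous.intervalIntegrable (by fun_prop) _ _
    · have := IntervalIntegrable.sum (hfinI t).toFinset (f := fun i s => α i * Z (s - x i)) (fun i _ => hi i)
      have he : (∑ i ∈ (hfinI t).toFinset, fun s => α i * Z (s - x i)) =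
          fun s => ∑ i ∈ (hfinI t).toFinset, α i * Z (s - x i) := by
        ext s; simp
      rwa [he] at this
  have hdiff : ∀ t i, ∫ y in (0:ℝ)..x i, Z (t - y) = S t - S (t - x i) := by
    intro t i
    rw [intervalIntegral.integral_comp_sub_left, sub_zero]
    simp only [hS]
    rw [intervalIntegral.integral_interval_sub_left (hZint _ _) (hZint _ _)]
  have hJsum : ∀ t, 0 ≤ t → HasSum (fun i => α i * ∫ y in (0:ℝ)..x i, Z (t - y)) (1 - Real.exp (-t)) := by
    intro t ht
    have h1 : HasSum (fun i => α i * S (t - x i)) (∑ i ∈ (hfinI t).toFinset, α i * S (t - x i)) := by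
      apply hasSum_sum_of_ne_finset_zero
      intro i hi
      rw [hSneg _ (by linarith [htail t i hi]), mul_zero]
    have h2 := (hsum.mul_right (S t)).sub h1
    have e1 : (fun i => α i * ∫ y in (0:ℝ)..x i, Z (t - y)) =
        fun i => α i * S t - α i * S (t - x i) := by
      ext i; rw [hdiff]; ring
    have e2 : 1 - Real.exp (-t) = 1 * S t - ∑ i ∈ (hfinI t).toFinset, α i * S (t - x i) := by
      rw [one_mul]; linarith [hSren t ht]
    rw [e1, e2]
    exact h2
  have hJ : Tendsto (fun t => ∑' i, α i * ∫ y in (0:ℝ)..x i, Z (t - y)) atTop (𝓝 1) := by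
    have : Tendsto (fun t : ℝ => 1 - Real.exp (-t)) atTop (𝓝 1) := by
      simpa using hexp.const_sub 1
    refine this.congr' ?_
    filter_upwards [eventually_ge_atTop 0] with t ht using (hJsum t ht).tsum_eq.symm
  set K := α i0 * (x i0 * Real.exp (-x i0)) with hK
  have hKpos : 0 < K := mul_pos (hα i0) (mul_pos (hx i0) (Real.exp_pos _))
  have hC : ∀ t, |Z t| ≤ 1 / K := by
    intro t
    rw [abs_of_nonneg (hZ0 t)]
    rcases lt_or_ge t 0 with h0 | h0
    · rw [hZneg t h0]; positivity
    · rw [le_div_iff₀ hKpos]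
      have hT : 0 ≤ t + x i0 := by linarith [hx i0]
      have h1 := le_hasSum (hJsum _ hT) i0 (fun j _ => mul_nonneg (hα j).le
        (intervalIntegral.integral_nonneg (hx j).le fun y _ => hZ0 _))
      have h2 : ∫ y in (0:ℝ)..x i0, Real.exp (-x i0) * Z t ≤ ∫ y in (0:ℝ)..x i0, Z (t + x i0 - y) := by
        apply intervalIntegral.integral_mono_on (hx i0).le intervalIntegrable_const
        · have := (hZint (t + x i0 - 0) (t + x i0 - x i0)).comp_sub_left (t + x i0)
          simpa using this
        · intro y hy
          refine le_trans ?_ (hmono t (t + x i0 - y) (by linarith [hy.2]))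
          apply mul_le_mul_of_nonneg_right _ (hZ0 _)
          exact Real.exp_le_exp.2 (by linarith [hy.1])
      rw [intervalIntegral.integral_const, sub_zero, smul_eq_mul] at h2
      have h3 := mul_le_mul_of_nonneg_left h2 (hα i0).le
      have h4 := Real.exp_pos (-(t + x i0))
      calc Z t * K = α i0 * (x i0 * (Real.exp (-x i0) * Z t)) := by rw [hK]; ring
        _ ≤ 1 := by linarith
  exact key_limit α x i0 hα hx hsum hH hrank Z hZm (1 / K) hC hZ0 hmono hZ1 hJ

/-- Blackwell renewal asymptotics in the higher-rank (non-lattice) case: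
if the group generated by `{−log α_i}` is not cyclic and
`H = −Σ α_i log α_i < ∞`, then `λ |A_λ| → 1/H` as `λ → 0⁺`. -/
theorem higher_rank_renewal_asymptotics {I : Type*} [Countable I]
    (α : I → ℝ) (hpos : ∀ i, 0 < α i) (hsum : HasSum α 1)
    (hrank : ¬ ∃ c : ℝ, ∀ i : I, ∃ k : ℤ, -Real.log (α i) = k * c)
    (hH : Summable fun i => α i * (-Real.log (α i))) :
    Filter.Tendsto
      (fun lam : ℝ => lam * (Nat.card {v : List I | lam ≤ wordWeight α v} : ℝ))
      (nhdsWithin 0 (Set.Ioi 0))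
      (nhds (1 / ∑' i : I, α i * (-Real.log (α i)))) := by
  classical
  set x : I → ℝ := fun i => -Real.log (α i) with hxdef
  have hax : ∀ i, α i = Real.exp (-x i) := fun i => by
    simp only [hxdef, neg_neg]; rw [Real.exp_log (hpos i)]
  have hne : Nonempty I := by
    by_contra h
    rw [not_nonempty_iff] at h
    exact hrank ⟨0, fun i => h.elim i⟩
  obtain ⟨i0⟩ := hne
  obtain ⟨i1, h01⟩ : ∃ i1, i1 ≠ i0 := by
    by_contra h
    push Not at h
    exact hrank ⟨x i0, fun i => ⟨1, by rw [h i]; simp [hxdef]⟩⟩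
  have hpair : ∀ i j, i ≠ j → α i + α j ≤ 1 := fun i j hij => by
    have := sum_le_hasSum {i, j} (fun k _ => (hpos k).le) hsum
    rwa [Finset.sum_pair hij] at this
  set ρ := 1 - min (α i0) (α i1) with hρ
  have hρ1 : ρ < 1 := by
    have := lt_min (hpos i0) (hpos i1)
    linarith
  have hle : ∀ i, α i ≤ ρ := by
    intro i
    by_cases hi : i = i0
    · have := hpair i i1 (by rw [hi]; exact h01.symm)
      linarith [min_le_right (α i0) (α i1)]
    · have := hpair i i0 hi
      linarith [min_le_left (α i0) (α i1)]
  have hρ0 : 0 < ρ := (hpos i0).trans_le (hle i0)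
  have hmain := renewal α x i0 hpos hax (-Real.log ρ) (by linarith [Real.log_neg hρ0 hρ1])
    (fun i => neg_le_neg (Real.log_le_log (hpos i) (hle i))) hsum hH hrank
  have hlog : Tendsto (fun lam : ℝ => -Real.log lam) (𝓝[>] 0) atTop :=
    tendsto_neg_atBot_atTop.comp Real.tendsto_log_nhdsGT_zero
  refine (hmain.comp hlog).congr' ?_
  have hw : ∀ v, wordWeight α v = Real.exp (-(v.map x).sum) := by
    intro v
    induction v with
    | nil => simp [wordWeight]
    | cons i w ih =>
      simp only [wordWeight, List.map_cons, List.prod_cons, List.sum_cons] at ih ⊢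
      rw [ih, neg_add, Real.exp_add, ← hax i]
  filter_upwards [self_mem_nhdsWithin] with lam hlam
  have hlam' : 0 < lam := hlam
  simp only [Function.comp, neg_neg, Real.exp_log hlam']
  have : lowSet x (-Real.log lam) = {v : List I | lam ≤ wordWeight α v} := by
    ext v
    simp only [lowSet, Set.mem_setOf_eq, hw]
    rw [← Real.log_le_iff_le_exp hlam']
    constructor <;> intro h <;> linarith
  rw [this]
  rfl
end
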